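/- Let y ∈ V^n be a probability vector with positive components and let k ≥ 1 be an integer. If T_{k+1}(y) = S(y), then T_k(y) = S(y). Consequently, if T_k(y) = S(y) for some k ≥ 1, then T_l(y) = S(y) for every l ≤ k. -/

import Mathlib

noncomputable section

/-- `eSum x l` : the sum of the `l` largest components of `x`. -/
def eSum {n : ℕ} (x : Fin n → ℝ) (l : ℕ) : ℝ :=
  sSup {r | ∃ s : Finset (Fin n), s.card = l ∧ r = ∑ i ∈ s, x i}

/-- `ESum x l` : the sum of the `l` smallest components of `x`. -/
def ESum {n : ℕ} (x : Fin n → ℝ) (l : ℕ) : ℝ :=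
  sInf {r | ∃ s : Finset (Fin n), s.card = l ∧ r = ∑ i ∈ s, x i}

/-- Majorization `x ≺ y` (for vectors with equal total sum):
`e_l(x) ≤ e_l(y)` for all `1 ≤ l ≤ n`. -/
def Maj {n : ℕ} (x y : Fin n → ℝ) : Prop :=
  (∑ i, x i) = (∑ i, y i) ∧ ∀ l : ℕ, 1 ≤ l → l ≤ n → eSum x l ≤ eSum y l

/-- Strict majorization `x ◁ y`: equal total sums and `e_l(x) < e_l(y)` for all
`1 ≤ l ≤ n - 1`. -/
def SMaj {n : ℕ} (x y : Fin n → ℝ) : Prop :=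
  (∑ i, x i) = (∑ i, y i) ∧ ∀ l : ℕ, 1 ≤ l → l + 1 ≤ n → eSum x l < eSum y l

/-- Super-majorization `x ≺ʷ y` : `E_l(x) ≥ E_l(y)` for all `1 ≤ l ≤ n`. -/
def SupMaj {n : ℕ} (x y : Fin n → ℝ) : Prop :=
  ∀ l : ℕ, 1 ≤ l → l ≤ n → ESum y l ≤ ESum x l

/-- Strict super-majorization `x ◁ʷ y` : `E_l(x) > E_l(y)` for all `1 ≤ l ≤ n`. -/
def SSupMaj {n : ℕ} (x y : Fin n → ℝ) : Prop :=
  ∀ l : ℕ, 1 ≤ l → l ≤ n → ESum y l < ESum x l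

/-- Tensor product of two vectors: the vector of all pairwise products. -/
def tensor {m k : ℕ} (x : Fin m → ℝ) (c : Fin k → ℝ) : Fin (m * k) → ℝ :=
  fun i => x (finProdFinEquiv.symm i).1 * c (finProdFinEquiv.symm i).2

/-- `k`-fold tensor power of a vector. -/
def tpow {n : ℕ} (x : Fin n → ℝ) (k : ℕ) : Fin (n ^ k) → ℝ :=
  fun i => ∏ j : Fin k, x (finFunctionFinEquiv.symm i j)

/-- `V^n` : probability vectors with components in non-increasing order. -/
def Vn (n : ℕ) : Set (Fin n → ℝ) :=
  {x | (∀ i, 0 ≤ x i) ∧ (∑ i, x i) = 1 ∧ Antitone x}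

/-- `S(y)` : members of `V^n` majorized by `y`. -/
def Sset {n : ℕ} (y : Fin n → ℝ) : Set (Fin n → ℝ) :=
  {x ∈ Vn n | Maj x y}

/-- `T(y,c)` : members of `V^n` with `x ⊗ c ≺ y ⊗ c`. -/
def Tcat {n k : ℕ} (y : Fin n → ℝ) (c : Fin k → ℝ) : Set (Fin n → ℝ) :=
  {x ∈ Vn n | Maj (tensor x c) (tensor y c)}

/-- Local uniformity `l_u(c)` : the minimum of the consecutive ratios `c_{i+1}/c_i`. -/
def lu {k : ℕ} (c : Fin k → ℝ) : ℝ :=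
  sInf {r | ∃ i : ℕ, ∃ h : i + 1 < k, r = c ⟨i + 1, h⟩ / c ⟨i, Nat.lt_of_succ_lt h⟩}

/-- Global uniformity `g_u(c) = c_k / c_1` (smallest over largest component of a
non-increasingly ordered vector). -/
def gu {k : ℕ} (c : Fin k → ℝ) : ℝ :=
  if h : 0 < k then c ⟨k - 1, Nat.sub_lt h Nat.one_pos⟩ / c ⟨0, h⟩ else 1

/-- Largest component. -/
def maxc {n : ℕ} (x : Fin n → ℝ) : ℝ := sSup (Set.range x)

/-- Smallest component. -/
def minc {n : ℕ} (x : Fin n → ℝ) : ℝ := sInf (Set.range x)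

/-- `c'` is a (contiguous) segment of `c`. -/
def IsSegment {j k : ℕ} (c' : Fin j → ℝ) (c : Fin k → ℝ) : Prop :=
  ∃ (i : ℕ) (_h : i + j ≤ k), ∀ t : Fin j, c' t = c ⟨i + t, by have := t.isLt; omega⟩

/-- The first `d` components of a vector. -/
def take {n : ℕ} (x : Fin n → ℝ) (d : ℕ) (h : d ≤ n) : Fin d → ℝ :=
  fun i => x ⟨i, Nat.lt_of_lt_of_le i.isLt h⟩

/-- The components of a vector after the first `d` ones. -/
def drop {n : ℕ} (x : Fin n → ℝ) (d : ℕ) : Fin (n - d) → ℝ :=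
  fun i => x ⟨d + i, by have := i.isLt; omega⟩

/-- The segment `(c_i, …, c_j)` of `c` (`0`-based indices). -/
def seg {k : ℕ} (c : Fin k → ℝ) (i j : ℕ) (hij : i ≤ j) (hj : j < k) :
    Fin (j - i + 1) → ℝ :=
  fun t => c ⟨i + t, by have := t.isLt; omega⟩

/-- `(c_i, …, c_j)` is a block of the decomposition `[c]_α` of the (positive,
non-increasingly ordered) vector `c` according to `α`: ratios within the block
exceed `α`, and the ratios at the two boundaries of the block are `≤ α`
(or the block touches an end of `c`). -/
def IsBlock {k : ℕ} (α : ℝ) (c : Fin k → ℝ) (i j : ℕ) : Prop :=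
  ∃ (hij : i ≤ j) (hj : j < k),
    (i = 0 ∨ c ⟨i, by omega⟩ / c ⟨i - 1, by omega⟩ ≤ α) ∧
    (j = k - 1 ∨ ∃ hj1 : j + 1 < k, c ⟨j + 1, hj1⟩ / c ⟨j, hj⟩ ≤ α) ∧
    (∀ (t : ℕ) (ht1 : i ≤ t) (ht2 : t < j), α < c ⟨t + 1, by omega⟩ / c ⟨t, by omega⟩)

/-- `T_k(y)` : states transformable to `y` with a `k`-dimensional catalyst. -/
def Tk {n : ℕ} (k : ℕ) (y : Fin n → ℝ) : Set (Fin n → ℝ) :=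
  {x ∈ Vn n | ∃ c : Fin k → ℝ, (∀ i, 0 < c i) ∧ (∑ i, c i) = 1 ∧ Antitone c ∧
    Maj (tensor x c) (tensor y c)}

/-- `M_k(y)` : states `x` with `x^{⊗k} ≺ y^{⊗k}`. -/
def Mk {n : ℕ} (k : ℕ) (y : Fin n → ℝ) : Set (Fin n → ℝ) :=
  {x ∈ Vn n | Maj (tpow x k) (tpow y k)}

/-- `T(y)` : states transformable to `y` with some catalyst. -/
def Tinf {n : ℕ} (y : Fin n → ℝ) : Set (Fin n → ℝ) :=
  {x ∈ Vn n | ∃ (k : ℕ) (c : Fin k → ℝ), 0 < k ∧ (∀ i, 0 < c i) ∧ (∑ i, c i) = 1 ∧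
    Antitone c ∧ Maj (tensor x c) (tensor y c)}

/-- `M(y)` : states `x` with `x^{⊗k} ≺ y^{⊗k}` for some `k ≥ 1`. -/
def Minf {n : ℕ} (y : Fin n → ℝ) : Set (Fin n → ℝ) :=
  {x ∈ Vn n | ∃ k : ℕ, 1 ≤ k ∧ Maj (tpow x k) (tpow y k)}

/-- `S^λ(y)` : states `x` with `x ≺ʷ λ y`. -/
def Slam {n : ℕ} (lam : ℝ) (y : Fin n → ℝ) : Set (Fin n → ℝ) :=
  {x ∈ Vn n | SupMaj x (fun i => lam * y i)}

/-- `T^λ(y,c)` : states `x` with `x ⊗ c ≺ʷ λ (y ⊗ c)`. -/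
def Tlamc {n k : ℕ} (lam : ℝ) (y : Fin n → ℝ) (c : Fin k → ℝ) : Set (Fin n → ℝ) :=
  {x ∈ Vn n | SupMaj (tensor x c) (fun i => lam * tensor y c i)}

/-- `T_k^λ(y)`. -/
def Tklam {n : ℕ} (k : ℕ) (lam : ℝ) (y : Fin n → ℝ) : Set (Fin n → ℝ) :=
  {x ∈ Vn n | ∃ c : Fin k → ℝ, (∀ i, 0 < c i) ∧ (∑ i, c i) = 1 ∧ Antitone c ∧
    SupMaj (tensor x c) (fun i => lam * tensor y c i)}

/-- `M_k^λ(y)`. -/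
def Mklam {n : ℕ} (k : ℕ) (lam : ℝ) (y : Fin n → ℝ) : Set (Fin n → ℝ) :=
  {x ∈ Vn n | SupMaj (tpow x k) (fun i => lam ^ k * tpow y k i)}

/-- `T^λ(y)`. -/
def Tlaminf {n : ℕ} (lam : ℝ) (y : Fin n → ℝ) : Set (Fin n → ℝ) :=
  {x ∈ Vn n | ∃ (k : ℕ) (c : Fin k → ℝ), 0 < k ∧ (∀ i, 0 < c i) ∧ (∑ i, c i) = 1 ∧
    Antitone c ∧ SupMaj (tensor x c) (fun i => lam * tensor y c i)}

/-- `M^λ(y)`. -/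
def Mlaminf {n : ℕ} (lam : ℝ) (y : Fin n → ℝ) : Set (Fin n → ℝ) :=
  {x ∈ Vn n | ∃ k : ℕ, 1 ≤ k ∧ SupMaj (tpow x k) (fun i => lam ^ k * tpow y k i)}

/-- `K_d(y)` : concatenations `x = x' ⊕ x''` with `x' ◁ y'` and `x'' ◁ y''`,
where `y'` is the first-`d` part of `y` and `y''` the rest. -/
def Kd {n : ℕ} (y : Fin n → ℝ) (d : ℕ) (h : d ≤ n) : Set (Fin n → ℝ) :=
  {x ∈ Vn n | SMaj (take x d h) (take y d h) ∧ SMaj (drop x d) (drop y d)}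

/-- `y(d)` : first `d` components equal to `e_d(y)/d`, the last `n-d` equal to
`(1 - e_d(y))/(n-d)`. -/
def yvec {n : ℕ} (y : Fin n → ℝ) (d : ℕ) : Fin n → ℝ :=
  fun i => if (i : ℕ) < d then eSum y d / d else (1 - eSum y d) / (n - d)

/-- `K_d^λ(y)` : states `x ∈ S^λ(y)` with `E_l(x) = λ E_l(y)` iff `l = n - d`. -/
def Kdlam {n : ℕ} (lam : ℝ) (y : Fin n → ℝ) (d : ℕ) : Set (Fin n → ℝ) :=
  {x ∈ Vn n | SupMaj x (fun i => lam * y i) ∧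
    ∀ l : ℕ, 1 ≤ l → l ≤ n → (ESum x l = lam * ESum y l ↔ l = n - d)}

/-- The total excess of the components of `x` over the threshold `t`. -/
def excess {n : ℕ} (x : Fin n → ℝ) (t : ℝ) : ℝ := ∑ i, max (x i - t) 0

theorem sum_le_eSum {n : ℕ} (x : Fin n → ℝ) (s : Finset (Fin n)) :
    ∑ i ∈ s, x i ≤ eSum x s.card := by
  apply le_csSup
  · apply Set.Finite.bddAbove
    apply (Set.finite_range fun s : Finset (Fin n) => ∑ i ∈ s, x i).subset
    rintro r ⟨s, -, rfl⟩
    exact ⟨s, rfl⟩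
  · exact ⟨s, rfl, rfl⟩

theorem exists_sum_eq_eSum {n : ℕ} (x : Fin n → ℝ) {l : ℕ} (hl : l ≤ n) :
    ∃ s : Finset (Fin n), s.card = l ∧ eSum x l = ∑ i ∈ s, x i := by
  have hfin : {r | ∃ s : Finset (Fin n), s.card = l ∧ r = ∑ i ∈ s, x i}.Finite := by
    apply (Set.finite_range fun s : Finset (Fin n) => ∑ i ∈ s, x i).subset
    rintro r ⟨s, -, rfl⟩
    exact ⟨s, rfl⟩
  have hne : {r | ∃ s : Finset (Fin n), s.card = l ∧ r = ∑ i ∈ s, x i}.Nonempty := by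
    obtain ⟨s, -, hs⟩ := Finset.exists_subset_card_eq (s := (Finset.univ : Finset (Fin n)))
      (n := l) (by simpa using hl)
    exact ⟨_, s, hs, rfl⟩
  exact hne.csSup_mem hfin

theorem eSum_convexCombo_le {n : ℕ} (u x : Fin n → ℝ) {l : ℕ} (hl : l ≤ n) {s : ℝ}
    (h0 : 0 ≤ s) (h1 : s ≤ 1) :
    eSum (fun i => (1 - s) * u i + s * x i) l ≤ (1 - s) * eSum u l + s * eSum x l := by
  obtain ⟨r, rfl, hr⟩ := exists_sum_eq_eSum (fun i => (1 - s) * u i + s * x i) hl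
  rw [hr, Finset.sum_add_distrib, ← Finset.mul_sum, ← Finset.mul_sum]
  have h1' : 0 ≤ 1 - s := by linarith
  gcongr <;> exact sum_le_eSum _ r

theorem sum_sub_le_excess {n : ℕ} (x : Fin n → ℝ) (s : Finset (Fin n)) (t : ℝ) :
    ∑ i ∈ s, x i - s.card * t ≤ excess x t := by
  calc ∑ i ∈ s, x i - s.card * t = ∑ i ∈ s, (x i - t) := by
        rw [Finset.sum_sub_distrib, Finset.sum_const, nsmul_eq_mul]
    _ ≤ ∑ i ∈ s, max (x i - t) 0 := Finset.sum_le_sum fun i _ => le_max_left _ _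
    _ ≤ excess x t :=
        Finset.sum_le_sum_of_subset_of_nonneg (Finset.subset_univ s)
          fun i _ _ => le_max_right _ _

theorem excess_eq_sum_sub {n : ℕ} {x : Fin n → ℝ} {s : Finset (Fin n)} {t : ℝ}
    (hs : ∀ i ∈ s, t ≤ x i) (hs' : ∀ i ∉ s, x i ≤ t) :
    excess x t = ∑ i ∈ s, x i - s.card * t := by
  have h : excess x t = ∑ i ∈ s, max (x i - t) 0 := by
    refine (Finset.sum_subset (Finset.subset_univ s) fun i _ hi => ?_).symm
    exact max_eq_right (by linarith [hs' i hi])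
  rw [h, Finset.sum_congr rfl fun i hi => max_eq_left (sub_nonneg.2 (hs i hi)),
    Finset.sum_sub_distrib, Finset.sum_const, nsmul_eq_mul]

theorem eSum_le_add_excess {n : ℕ} (x : Fin n → ℝ) {l : ℕ} (hl : l ≤ n) (t : ℝ) :
    eSum x l ≤ l * t + excess x t := by
  obtain ⟨s, rfl, hs⟩ := exists_sum_eq_eSum x hl
  linarith [sum_sub_le_excess x s t]

theorem exists_eSum_eq_add_excess {n : ℕ} (x : Fin n → ℝ) {l : ℕ} (h1 : 1 ≤ l) (hl : l ≤ n) :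
    ∃ t, eSum x l = l * t + excess x t := by
  obtain ⟨s, rfl, hs⟩ := exists_sum_eq_eSum x hl
  obtain ⟨m, hm, hmin⟩ := s.exists_min_image x (Finset.card_pos.1 h1)
  refine ⟨x m, ?_⟩
  rw [excess_eq_sum_sub (s := s) hmin, hs]
  · ring
  · intro i hi
    have hi' : i ∉ s.erase m := fun h => hi (Finset.mem_of_mem_erase h)
    have h := sum_le_eSum x (insert i (s.erase m))
    rw [Finset.card_insert_of_notMem hi', Finset.card_erase_add_one hm, hs,
      Finset.sum_insert hi', ← Finset.add_sum_erase s x hm] at h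
    linarith

theorem maj_iff_excess {n : ℕ} (x y : Fin n → ℝ) :
    Maj x y ↔ ∑ i, x i = ∑ i, y i ∧ ∀ t, excess x t ≤ excess y t := by
  refine and_congr_right fun _ => ⟨fun h t => ?_, fun h l h1 hl => ?_⟩
  · set s : Finset (Fin n) := {i | t < x i} with hs
    have hx : excess x t = ∑ i ∈ s, x i - s.card * t :=
      excess_eq_sum_sub (fun i hi => by simp [hs] at hi; exact hi.le)
        (fun i hi => by simpa [hs] using hi)
    have hle : s.card ≤ n := by simpa using s.card_le_univ
    rcases Nat.eq_zero_or_pos s.card with h0 | h0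
    · rw [hx, Finset.card_eq_zero.1 h0]
      simpa [excess] using Finset.sum_nonneg fun i (_ : i ∈ Finset.univ) => le_max_right (y i - t) 0
    · linarith [sum_le_eSum x s, h _ h0 hle, eSum_le_add_excess y hle t]
  · obtain ⟨t, ht⟩ := exists_eSum_eq_add_excess y h1 hl
    linarith [eSum_le_add_excess x hl t, h t]

theorem sum_tensor {n k : ℕ} (x : Fin n → ℝ) (c : Fin k → ℝ) :
    ∑ i, tensor x c i = (∑ i, x i) * ∑ j, c j := by
  rw [← Equiv.sum_comp finProdFinEquiv, Fintype.sum_prod_type, Finset.sum_mul_sum]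
  simp [tensor]

theorem excess_tensor {n k : ℕ} (x : Fin n → ℝ) {c : Fin k → ℝ} (hc : ∀ j, 0 < c j) (t : ℝ) :
    excess (tensor x c) t = ∑ j, c j * excess x (t / c j) := by
  rw [excess, ← Equiv.sum_comp finProdFinEquiv, Fintype.sum_prod_type, Finset.sum_comm]
  refine Finset.sum_congr rfl fun j _ => ?_
  rw [excess, Finset.mul_sum]
  refine Finset.sum_congr rfl fun i _ => ?_
  have := hc j
  rw [mul_max_of_nonneg _ _ this.le, mul_zero]
  simp only [tensor, Equiv.symm_apply_apply]
  congr 1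
  field_simp

theorem Maj.tensor_right {n k : ℕ} {x y : Fin n → ℝ} (h : Maj x y) {c : Fin k → ℝ}
    (hc : ∀ j, 0 < c j) : Maj (tensor x c) (tensor y c) := by
  rw [maj_iff_excess] at h ⊢
  refine ⟨by rw [sum_tensor, sum_tensor, h.1], fun t => ?_⟩
  rw [excess_tensor x hc, excess_tensor y hc]
  exact Finset.sum_le_sum fun j _ => mul_le_mul_of_nonneg_left (h.2 _) (hc j).le

/-- If `c` catalyses `x` into `y` and the components of `c'` are taken from a multiple of `c`,
then any failure of `c'` at a threshold is accompanied by a gain at the same threshold. -/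
theorem exists_excess_lt_of_rescale {n k k' : ℕ} {x y : Fin n → ℝ} {c : Fin k → ℝ}
    (hc : ∀ j, 0 < c j) (h : Maj (tensor x c) (tensor y c)) {a : ℝ} (ha : 0 < a)
    (f : Fin k' → Fin k) (hf : Function.Surjective f) {t : ℝ}
    (ht : excess (tensor y fun j => a * c (f j)) t < excess (tensor x fun j => a * c (f j)) t) :
    ∃ j, excess x (t / (a * c (f j))) < excess y (t / (a * c (f j))) := by
  by_contra! hcon
  have hge : ∀ j, c j * excess y (t / a / c j) ≤ c j * excess x (t / a / c j) := by
    intro j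
    obtain ⟨i, rfl⟩ := hf j
    rw [div_div]
    exact mul_le_mul_of_nonneg_left (hcon i) (hc _).le
  have hsum := ((maj_iff_excess _ _).1 h).2 (t / a)
  rw [excess_tensor x hc, excess_tensor y hc] at hsum
  have heq := (Finset.sum_eq_sum_iff_of_le fun j _ => hge j).1
    (le_antisymm (Finset.sum_le_sum fun j _ => hge j) hsum)
  have hpos : ∀ j, 0 < a * c (f j) := fun j => mul_pos ha (hc _)
  rw [excess_tensor x hpos, excess_tensor y hpos] at ht
  refine ht.ne (Finset.sum_congr rfl fun j _ => ?_)
  have := heq (f j) (Finset.mem_univ _)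
  rw [div_div] at this
  rw [mul_assoc, mul_assoc, this]

/-- Averaging `y` over `s` and over the complement of `s`. -/
def blockAverage {n : ℕ} (y : Fin n → ℝ) (s : Finset (Fin n)) : Fin n → ℝ :=
  fun i => if i ∈ s then (∑ j ∈ s, y j) / s.card else (∑ j ∈ sᶜ, y j) / sᶜ.card

theorem sum_blockAverage_self {n : ℕ} (y : Fin n → ℝ) (s : Finset (Fin n)) :
    ∑ i ∈ s, blockAverage y s i = ∑ i ∈ s, y i := by
  rw [Finset.sum_congr rfl fun i hi => by rw [blockAverage, if_pos hi], Finset.sum_const,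
    nsmul_eq_mul]
  rcases s.eq_empty_or_nonempty with rfl | hs
  · simp
  · have : (s.card : ℝ) ≠ 0 := by exact_mod_cast hs.card_ne_zero
    field_simp

theorem blockAverage_compl {n : ℕ} (y : Fin n → ℝ) (s : Finset (Fin n)) :
    blockAverage y sᶜ = blockAverage y s := by
  funext i
  by_cases hi : i ∈ s <;> simp [blockAverage, hi]

theorem sum_blockAverage {n : ℕ} (y : Fin n → ℝ) (s : Finset (Fin n)) :
    ∑ i, blockAverage y s i = ∑ i, y i := by
  rw [← Finset.sum_add_sum_compl s, ← Finset.sum_add_sum_compl s, sum_blockAverage_self]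
  congr 1
  simpa [blockAverage_compl] using sum_blockAverage_self y sᶜ

theorem sum_max_blockAverage {n : ℕ} (y : Fin n → ℝ) (s : Finset (Fin n)) (t : ℝ) :
    ∑ i ∈ s, max (blockAverage y s i - t) 0 = max (∑ i ∈ s, (y i - t)) 0 := by
  rw [Finset.sum_congr rfl fun i hi => by rw [blockAverage, if_pos hi], Finset.sum_const,
    nsmul_eq_mul, Finset.sum_sub_distrib, Finset.sum_const, nsmul_eq_mul]
  rcases s.eq_empty_or_nonempty with rfl | hs
  · simp
  · have : (s.card : ℝ) ≠ 0 := by exact_mod_cast hs.card_ne_zero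
    rw [mul_max_of_nonneg _ _ (Nat.cast_nonneg _), mul_zero]
    congr 1
    field_simp

theorem max_sum_le_sum_max {ι : Type*} (s : Finset ι) (g : ι → ℝ) :
    max (∑ i ∈ s, g i) 0 ≤ ∑ i ∈ s, max (g i) 0 :=
  max_le (Finset.sum_le_sum fun _ _ => le_max_left _ _)
    (Finset.sum_nonneg fun _ _ => le_max_right _ _)

theorem max_sum_lt_sum_max {ι : Type*} {s : Finset ι} {g : ι → ℝ} (hneg : ∃ i ∈ s, g i < 0)
    (hpos : ∃ i ∈ s, 0 < g i) : max (∑ i ∈ s, g i) 0 < ∑ i ∈ s, max (g i) 0 := by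
  obtain ⟨i, hi, hi'⟩ := hneg
  obtain ⟨j, hj, hj'⟩ := hpos
  refine max_lt ?_ ?_
  · exact Finset.sum_lt_sum (fun _ _ => le_max_left _ _) ⟨i, hi, lt_max_of_lt_right hi'⟩
  · exact Finset.sum_pos' (fun _ _ => le_max_right _ _) ⟨j, hj, lt_max_of_lt_left hj'⟩

theorem excess_blockAverage {n : ℕ} (y : Fin n → ℝ) (s : Finset (Fin n)) (t : ℝ) :
    excess (blockAverage y s) t =
      max (∑ i ∈ s, (y i - t)) 0 + max (∑ i ∈ sᶜ, (y i - t)) 0 := by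
  rw [excess, ← Finset.sum_add_sum_compl s, sum_max_blockAverage]
  congr 1
  simpa [blockAverage_compl] using sum_max_blockAverage y sᶜ t

theorem maj_blockAverage {n : ℕ} (y : Fin n → ℝ) (s : Finset (Fin n)) :
    Maj (blockAverage y s) y := by
  refine (maj_iff_excess _ _).2 ⟨sum_blockAverage y s, fun t => ?_⟩
  rw [excess_blockAverage, excess, ← Finset.sum_add_sum_compl s]
  exact add_le_add (max_sum_le_sum_max _ _) (max_sum_le_sum_max _ _)

/-- The block average of `y` over an initial segment on which `x` exceeds `y` is strictly below
`y` at every threshold where `x` is. -/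
theorem excess_blockAverage_lt {n : ℕ} {x y : Fin n → ℝ} (hy : Antitone y)
    (hsum : ∑ i, x i = ∑ i, y i) {s : Finset (Fin n)} (hs : ∀ i ∈ s, ∀ j ∉ s, i ≤ j)
    (hsn : s.Nonempty) (hscn : sᶜ.Nonempty) (hxs : ∑ i ∈ s, y i < ∑ i ∈ s, x i) {t : ℝ}
    (ht : excess x t < excess y t) :
    excess (blockAverage y s) t < excess y t := by
  have key : ((∃ i ∈ s, y i - t < 0) ∧ ∃ i ∈ s, 0 < y i - t) ∨
      ((∃ i ∈ sᶜ, y i - t < 0) ∧ ∃ i ∈ sᶜ, 0 < y i - t) := by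
    by_contra! hcon
    obtain ⟨h1, h2⟩ := hcon
    obtain ⟨a, ha⟩ := hsn
    obtain ⟨b, hb⟩ := hscn
    refine ht.not_ge ?_
    by_cases hlow : ∃ i ∈ s, y i - t < 0
    · have hle : ∀ i, y i ≤ t := by
        intro i
        by_cases hi : i ∈ s
        · linarith [h1 hlow i hi]
        · obtain ⟨j, hj, hj'⟩ := hlow
          linarith [hy (hs j hj i hi)]
      rw [excess_eq_sum_sub (s := ∅) (by simp) fun i _ => hle i]
      simpa [excess] using Finset.sum_nonneg fun i (_ : i ∈ Finset.univ) => le_max_right (x i - t) 0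
    push Not at hlow
    by_cases hlow' : ∃ i ∈ sᶜ, y i - t < 0
    · rw [excess_eq_sum_sub (s := s) (fun i hi => by linarith [hlow i hi])
        fun i hi => by linarith [h2 hlow' i (by simpa using hi)]]
      linarith [sum_sub_le_excess x s t]
    · push Not at hlow'
      have hge : ∀ i, t ≤ y i := by
        intro i
        by_cases hi : i ∈ s
        · linarith [hlow i hi]
        · linarith [hlow' i (by simpa using hi)]
      rw [excess_eq_sum_sub (s := Finset.univ) (fun i _ => hge i) (by simp), ← hsum]
      exact sum_sub_le_excess x _ t
  rw [excess_blockAverage, excess, ← Finset.sum_add_sum_compl s]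
  rcases key with ⟨h1, h2⟩ | ⟨h1, h2⟩
  · exact add_lt_add_of_lt_of_le (max_sum_lt_sum_max h1 h2) (max_sum_le_sum_max _ _)
  · exact add_lt_add_of_le_of_lt (max_sum_le_sum_max _ _) (max_sum_lt_sum_max h1 h2)

theorem blockAverage_mem_Vn {n : ℕ} {y : Fin n → ℝ} (hy : y ∈ Vn n) {s : Finset (Fin n)}
    (hs : ∀ i ∈ s, ∀ j ∉ s, i ≤ j) : blockAverage y s ∈ Vn n := by
  obtain ⟨h0, h1, hanti⟩ := hy
  refine ⟨fun i => ?_, by rw [sum_blockAverage, h1], fun i j hij => ?_⟩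
  · unfold blockAverage
    split_ifs <;> exact div_nonneg (Finset.sum_nonneg fun i _ => h0 i) (Nat.cast_nonneg _)
  · by_cases hi : i ∈ s
    · by_cases hj : j ∈ s
      · simp [blockAverage, hi, hj]
      · have hspos : (0 : ℝ) < s.card := by exact_mod_cast Finset.card_pos.2 ⟨i, hi⟩
        have hcpos : (0 : ℝ) < sᶜ.card := by
          exact_mod_cast Finset.card_pos.2 ⟨j, Finset.mem_compl.2 hj⟩
        obtain ⟨m, hm, hmin⟩ := s.exists_min_image y ⟨i, hi⟩
        have hA : y m ≤ (∑ i ∈ s, y i) / s.card := by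
          rw [le_div_iff₀ hspos, mul_comm, ← nsmul_eq_mul]
          exact Finset.card_nsmul_le_sum s y _ hmin
        have hB : (∑ i ∈ sᶜ, y i) / sᶜ.card ≤ y m := by
          rw [div_le_iff₀ hcpos, mul_comm, ← nsmul_eq_mul]
          exact Finset.sum_le_card_nsmul sᶜ y _
            fun q hq => hanti (hs m hm q (Finset.mem_compl.1 hq))
        simpa [blockAverage, hi, hj] using hB.trans hA
    · have hj : j ∉ s := by
        intro hj
        exact hi (le_antisymm hij (hs j hj i hi) ▸ hj)
      simp [blockAverage, hi, hj]

theorem convexCombo_mem_Vn {n : ℕ} {u x : Fin n → ℝ} (hu : u ∈ Vn n) (hx : x ∈ Vn n) {s : ℝ}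
    (h0 : 0 ≤ s) (h1 : s ≤ 1) : (fun i => (1 - s) * u i + s * x i) ∈ Vn n := by
  obtain ⟨hu0, hu1, hu⟩ := hu
  obtain ⟨hx0, hx1, hx⟩ := hx
  have h1' : 0 ≤ 1 - s := by linarith
  refine ⟨fun i => ?_, ?_, fun i j hij => ?_⟩
  · exact add_nonneg (mul_nonneg h1' (hu0 i)) (mul_nonneg h0 (hx0 i))
  · rw [Finset.sum_add_distrib, ← Finset.mul_sum, ← Finset.mul_sum, hu1, hx1]
    ring
  · exact add_le_add (mul_le_mul_of_nonneg_left (hu hij) h1')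
      (mul_le_mul_of_nonneg_left (hx hij) h0)

/-- A state not majorized by `y` exceeds `y` on a proper initial segment. -/
theorem exists_initial_segment_sum_lt {n : ℕ} {x y : Fin n → ℝ} (hx : Antitone x)
    (hsum : ∑ i, x i = ∑ i, y i) (h : ¬ Maj x y) :
    ∃ s : Finset (Fin n), (∀ i ∈ s, ∀ j ∉ s, i ≤ j) ∧ s.Nonempty ∧ sᶜ.Nonempty ∧
      ∑ i ∈ s, y i < ∑ i ∈ s, x i := by
  rw [maj_iff_excess] at h
  push Not at h
  obtain ⟨t, ht⟩ := h hsum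
  set s : Finset (Fin n) := {i | t < x i} with hs
  have hex : excess x t = ∑ i ∈ s, x i - s.card * t :=
    excess_eq_sum_sub (fun i hi => by simp [hs] at hi; exact hi.le)
      (fun i hi => by simpa [hs] using hi)
  have hlt : ∑ i ∈ s, y i < ∑ i ∈ s, x i := by linarith [sum_sub_le_excess y s t]
  refine ⟨s, fun i hi j hj => ?_, ?_, ?_, hlt⟩
  · by_contra! hji
    simp only [hs, Finset.mem_filter, Finset.mem_univ, true_and] at hi hj
    exact hj (hi.trans_le (hx hji.le))
  · by_contra! h0
    simp [h0] at hlt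
  · by_contra! h0
    rw [Finset.compl_eq_empty_iff] at h0
    rw [h0, hsum] at hlt
    exact lt_irrefl _ hlt

/-- A sum over an initial segment that exceeds that of `y` is an obstruction to
majorization by `y`. -/
theorem not_maj_of_initial_segment_sum_lt {n : ℕ} {x y : Fin n → ℝ} (hy : Antitone y)
    {s : Finset (Fin n)} (hs : ∀ i ∈ s, ∀ j ∉ s, i ≤ j) (hsn : s.Nonempty)
    (h : ∑ i ∈ s, y i < ∑ i ∈ s, x i) : ¬ Maj x y := by
  intro hmaj
  obtain ⟨m, hm, hmin⟩ := s.exists_min_image y hsn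
  have h1 := ((maj_iff_excess _ _).1 hmaj).2 (y m)
  rw [excess_eq_sum_sub (s := s) hmin fun i hi => hy (hs m hm i hi)] at h1
  linarith [sum_sub_le_excess x s (y m)]

theorem tensor_convexCombo {n k : ℕ} (u x : Fin n → ℝ) (c : Fin k → ℝ) (s : ℝ) :
    tensor (fun i => (1 - s) * u i + s * x i) c =
      fun i => (1 - s) * tensor u c i + s * tensor x c i := by
  funext i
  simp only [tensor]
  ring

/-- If `u ≺ y` strictly wherever `x` violates `x ≺ y`, then a small step from `u` towards `x`
stays majorized by `y`. -/
theorem exists_convexCombo_maj {N : ℕ} {u x y : Fin N → ℝ} (hu : Maj u y)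
    (hsum : ∑ i, x i = ∑ i, y i)
    (h : ∀ l, 1 ≤ l → l ≤ N → eSum y l < eSum x l → eSum u l < eSum y l) :
    ∃ s : ℝ, 0 < s ∧ s < 1 ∧ Maj (fun i => (1 - s) * u i + s * x i) y := by
  have hlt : ∀ᶠ s : ℝ in nhdsWithin 0 (Set.Ioi 0), 0 < s ∧ s < 1 := by
    filter_upwards [Ioo_mem_nhdsGT (zero_lt_one' ℝ)] with s hs using hs
  have hall : ∀ᶠ s : ℝ in nhdsWithin 0 (Set.Ioi 0), ∀ l ∈ Finset.Icc 1 N,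
      (1 - s) * eSum u l + s * eSum x l ≤ eSum y l := by
    rw [Filter.eventually_all_finset]
    intro l hl
    obtain ⟨h1, hN⟩ := Finset.mem_Icc.1 hl
    by_cases hxl : eSum y l < eSum x l
    · have hcont : Continuous fun s : ℝ => (1 - s) * eSum u l + s * eSum x l := by fun_prop
      have hev : ∀ᶠ s : ℝ in nhds 0, (1 - s) * eSum u l + s * eSum x l < eSum y l :=
        hcont.continuousAt.eventually_lt continuousAt_const (by simpa using h l h1 hN hxl)
      filter_upwards [nhdsWithin_le_nhds hev] with s hs using hs.le
    · filter_upwards [hlt] with s hs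
      nlinarith [hu.2 l h1 hN, mul_nonneg hs.1.le (sub_nonneg.2 (not_lt.1 hxl)),
        mul_nonneg (sub_nonneg.2 hs.2.le) (sub_nonneg.2 (hu.2 l h1 hN))]
  obtain ⟨s, ⟨hs0, hs1⟩, hs⟩ := (hlt.and hall).exists
  refine ⟨s, hs0, hs1, ?_, fun l h1 hN => ?_⟩
  · rw [Finset.sum_add_distrib, ← Finset.mul_sum, ← Finset.mul_sum, hu.1, hsum]
    ring
  · exact (eSum_convexCombo_le u x hN hs0.le hs1.le).trans (hs l (Finset.mem_Icc.2 ⟨h1, hN⟩))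

theorem Sset_subset_Tk {n k : ℕ} (hk : 1 ≤ k) (y : Fin n → ℝ) : Sset y ⊆ Tk k y := by
  rintro x ⟨hx, hmaj⟩
  have hk' : (0 : ℝ) < k := by exact_mod_cast hk
  have hc : ∀ _ : Fin k, (0 : ℝ) < (k : ℝ)⁻¹ := fun _ => inv_pos.2 hk'
  refine ⟨hx, fun _ => (k : ℝ)⁻¹, hc, ?_, antitone_const, hmaj.tensor_right hc⟩
  simp [hk'.ne']

/-- If catalysts of dimension `k` are useful for the target `y`, so are those of any larger
dimension. -/
theorem Tk_eq_Sset_of_le {n k k' : ℕ} (hk : 1 ≤ k) (hkk' : k ≤ k') {y : Fin n → ℝ}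
    (hy : y ∈ Vn n) (h : Tk k' y = Sset y) : Tk k y = Sset y := by
  refine Set.Subset.antisymm ?_ (Sset_subset_Tk hk y)
  rintro x ⟨hx, c, hc, -, hcanti, hmaj⟩
  refine ⟨hx, ?_⟩
  by_contra hnot
  have hsum : ∑ i, x i = ∑ i, y i := hx.2.1.trans hy.2.1.symm
  obtain ⟨s, hs, hsn, hscn, hxs⟩ := exists_initial_segment_sum_lt hx.2.2 hsum hnot
  set u := blockAverage y s with hu_def
  have huV : u ∈ Vn n := blockAverage_mem_Vn hy hs
  let f : Fin k' → Fin k := fun j => ⟨min j (k - 1), by omega⟩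
  have hf : Function.Surjective f := by
    intro j
    refine ⟨⟨j, by omega⟩, Fin.ext ?_⟩
    have := j.isLt
    simp only [f]
    omega
  have hfmono : Monotone f := fun i j hij => min_le_min_right _ (Fin.le_def.1 hij)
  have hpos : 0 < ∑ j, c (f j) :=
    Finset.sum_pos (fun j _ => hc _) ⟨⟨0, by omega⟩, Finset.mem_univ _⟩
  set a := (∑ j, c (f j))⁻¹ with ha_def
  have ha : 0 < a := inv_pos.2 hpos
  set c' : Fin k' → ℝ := fun j => a * c (f j) with hc'_def
  have hc' : ∀ j, 0 < c' j := fun j => mul_pos ha (hc _)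
  have huy : Maj (tensor u c') (tensor y c') := (maj_blockAverage y s).tensor_right hc'
  obtain ⟨r, hr0, hr1, hr⟩ := exists_convexCombo_maj (x := tensor x c') huy
    (by rw [sum_tensor, sum_tensor, hsum]) (by
      intro l h1 hl hlt
      obtain ⟨t, ht⟩ := exists_eSum_eq_add_excess (tensor y c') h1 hl
      have hlt' : excess (tensor y c') t < excess (tensor x c') t := by
        linarith [eSum_le_add_excess (tensor x c') hl t]
      obtain ⟨j, hj⟩ := exists_excess_lt_of_rescale hc hmaj ha f hf hlt'
      have hj' := excess_blockAverage_lt hy.2.2 hsum hs hsn hscn hxs hj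
      have hult : excess (tensor u c') t < excess (tensor y c') t := by
        rw [excess_tensor u hc', excess_tensor y hc']
        refine Finset.sum_lt_sum (fun i _ => mul_le_mul_of_nonneg_left
          (((maj_iff_excess _ _).1 (maj_blockAverage y s)).2 _) (hc' i).le)
          ⟨j, Finset.mem_univ _, mul_lt_mul_of_pos_left hj' (hc' j)⟩
      linarith [eSum_le_add_excess (tensor u c') hl t])
  rw [← tensor_convexCombo] at hr
  have hmem : (fun i => (1 - r) * u i + r * x i) ∈ Tk k' y :=
    ⟨convexCombo_mem_Vn huV hx hr0.le hr1.le, c', hc',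
      by rw [hc'_def, ← Finset.mul_sum, ha_def, inv_mul_cancel₀ hpos.ne'],
      fun i j hij => mul_le_mul_of_nonneg_left (hcanti (hfmono hij)) ha.le, hr⟩
  rw [h] at hmem
  refine not_maj_of_initial_segment_sum_lt hy.2.2 hs hsn ?_ hmem.2
  rw [Finset.sum_add_distrib, ← Finset.mul_sum, ← Finset.mul_sum, hu_def, sum_blockAverage_self]
  nlinarith

/-- Theorem 10 of the paper. `T_{k+1}(y) = S(y)` implies
`T_k(y) = S(y)`, and consequently `T_k(y) = S(y)` implies `T_l(y) = S(y)`
for all `1 ≤ l ≤ k`. -/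
theorem stmt8 {n k : ℕ} (hk : 1 ≤ k)
    (y : Fin n → ℝ) (hy : y ∈ Vn n) (hypos : ∀ i, 0 < y i) :
    (Tk (k + 1) y = Sset y → Tk k y = Sset y) ∧
    (∀ k' : ℕ, 1 ≤ k' → Tk k' y = Sset y →
      ∀ l : ℕ, 1 ≤ l → l ≤ k' → Tk l y = Sset y) :=
  ⟨fun h => Tk_eq_Sset_of_le hk k.le_succ hy h,
    fun _ _ h _ hl hlk => Tk_eq_Sset_of_le hl hlk hy h⟩

end
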